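/- For every integer m ≥ 2 and every Coxeter element c of G4, the set of length-m reflection factorizations of c decomposes into exactly ⌈m/3⌉ Hurwitz orbits. -/

import Mathlib

noncomputable section

open Matrix Complex

/-- The `i`-th Hurwitz move on length-`k` tuples of group elements. -/
def IsHurwitzMove {G : Type*} [Group G] {k : ℕ} (t t' : Fin k → G) : Prop :=
  ∃ i : ℕ, ∃ h : i + 1 < k,
    t' ⟨i, Nat.lt_of_succ_lt h⟩ = t ⟨i + 1, h⟩ ∧
    t' ⟨i + 1, h⟩ = (t ⟨i + 1, h⟩)⁻¹ * t ⟨i, Nat.lt_of_succ_lt h⟩ * t ⟨i + 1, h⟩ ∧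
    ∀ j : Fin k, (j : ℕ) ≠ i → (j : ℕ) ≠ i + 1 → t' j = t j

/-- Two tuples lie in the same Hurwitz orbit. -/
def SameHurwitzOrbit {G : Type*} [Group G] {k : ℕ} (t t' : Fin k → G) : Prop :=
  Relation.EqvGen IsHurwitzMove t t'

/-- A group element `r` appears (as an entry) in the Hurwitz orbit of the tuple `t`. -/
def Appears {G : Type*} [Group G] {k : ℕ} (r : G) (t : Fin k → G) : Prop :=
  ∃ s : Fin k → G, SameHurwitzOrbit t s ∧ ∃ j, s j = r

/-- A tuple has two consecutive equal entries. -/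
def HasConsecutiveEqualPair {G : Type*} [Group G] {k : ℕ} (t : Fin k → G) : Prop :=
  ∃ i : ℕ, ∃ h : i + 1 < k, t ⟨i, Nat.lt_of_succ_lt h⟩ = t ⟨i + 1, h⟩

/-- Replace the `p`-th entry of a tuple by two consecutive copies of its square. -/
def doubleAt {G : Type*} [Group G] {m : ℕ} (t : Fin m → G) (p : Fin m) : Fin (m + 1) → G :=
  fun j =>
    if h1 : (j : ℕ) < (p : ℕ) then t ⟨j, h1.trans p.isLt⟩
    else if h2 : (j : ℕ) ≤ (p : ℕ) + 1 then (t p) ^ 2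
    else t ⟨(j : ℕ) - 1, by have := j.isLt; omega⟩

/-- `ω = e^(2πi/3)`. -/
def ω : ℂ := Complex.exp (2 * Real.pi * Complex.I / 3)

def AMat : Matrix (Fin 2) (Fin 2) ℂ := !![1, 0; 0, ω]

def BMat : Matrix (Fin 2) (Fin 2) ℂ :=
  !![(ω - ω ^ 2) / 3, ω ^ 2; (-2 * ω ^ 2) / 3, (-ω - 2 * ω ^ 2) / 3]

/-- The complex reflection group G₄ as the subgroup of GL(2,ℂ) generated by `AMat`, `BMat`. -/
def G4 : Subgroup (GL (Fin 2) ℂ) :=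
  Subgroup.closure {g : GL (Fin 2) ℂ |
    (g : Matrix (Fin 2) (Fin 2) ℂ) = AMat ∨ (g : Matrix (Fin 2) (Fin 2) ℂ) = BMat}

/-- The matrix underlying an element of G₄. -/
def mat (t : G4) : Matrix (Fin 2) (Fin 2) ℂ := ((t : GL (Fin 2) ℂ) : Matrix (Fin 2) (Fin 2) ℂ)

/-- A reflection in G₄: a non-identity element with eigenvalue 1. -/
def IsReflection (t : G4) : Prop := t ≠ 1 ∧ (mat t - 1).det = 0

/-- The conjugacy class R₁ of reflections of determinant ω. -/
def R1 : Set G4 := {t | IsReflection t ∧ (mat t).det = ω}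

/-- The conjugacy class R₂ of reflections of determinant ω². -/
def R2 : Set G4 := {t | IsReflection t ∧ (mat t).det = ω ^ 2}

/-- A Coxeter element of G₄: an element with a primitive 6th root of unity as eigenvalue. -/
def IsCoxeter (c : G4) : Prop :=
  ∃ ζ : ℂ, IsPrimitiveRoot ζ 6 ∧ (mat c - ζ • (1 : Matrix (Fin 2) (Fin 2) ℂ)).det = 0

/-- The relators of G₅: a³, b³, abab(baba)⁻¹. -/
def g5Rels : Set (FreeGroup (Fin 2)) :=
  {FreeGroup.of 0 ^ 3, FreeGroup.of 1 ^ 3,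
    FreeGroup.of 0 * FreeGroup.of 1 * FreeGroup.of 0 * FreeGroup.of 1 *
      (FreeGroup.of 1 * FreeGroup.of 0 * FreeGroup.of 1 * FreeGroup.of 0)⁻¹}

/-- The complex reflection group G₅, by its presentation ⟨a,b | a³ = b³ = 1, abab = baba⟩. -/
abbrev G5 := PresentedGroup g5Rels

def ga : G5 := PresentedGroup.of 0
def gb : G5 := PresentedGroup.of 1

/-- The conjugacy class of `a` in G₅. -/
def S1 : Set G5 := {t | IsConj ga t}
/-- The conjugacy class of `b` in G₅. -/
def S2 : Set G5 := {t | IsConj gb t}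
/-- The conjugacy class of `a²` in G₅. -/
def S3 : Set G5 := {t | IsConj (ga ^ 2) t}
/-- The conjugacy class of `b²` in G₅. -/
def S4 : Set G5 := {t | IsConj (gb ^ 2) t}

/-- A reflection in G₅: a conjugate of a, b, a², or b². -/
def IsReflection5 (t : G5) : Prop := t ∈ S1 ∨ t ∈ S2 ∨ t ∈ S3 ∨ t ∈ S4

/-- A Coxeter element of G₅: an element of order 12. -/
def IsCoxeter5 (c : G5) : Prop := orderOf c = 12


namespace G4Proof

/-! ### The finite model: eight reflections, conjugation and multiplication tables -/

def cj (x y : Fin 8) : Fin 8 :=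
  Fin.ofNat 8 (6042554194103876324320341506666216033220697756140621857880 >>> (3 * (8 * x.val + y.val)))

def mulTab : ℕ :=
  6293120927786335260905191377337577087849159099542054164024832641772784018098324505499042733730976044541635111557544525568210700852617723001284658017631998450160220007937866492162277541295529476127928216818698130128050922146659562182700484632049533034859054322624923268148564964905049001025

def mulT (g : Fin 24) (x : Fin 8) : Fin 24 :=
  Fin.ofNat 24 ((mulTab >>> (5 * (8 * g.val + x.val))) % 32)

def inv8 (x : Fin 8) : Fin 8 := Fin.ofNat 8 (x.val + 4)

def kf (x : Fin 8) : ℕ := if x.val < 4 then 1 else 0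

def kap (l : List (Fin 8)) : ℕ := (l.map kf).sum

def pr (l : List (Fin 8)) : Fin 24 := l.foldl mulT 0

def dt (g : Fin 24) : ℕ := List.getD [0, 1, 1, 1, 1, 2, 2, 2, 2, 2, 2, 0, 0, 0, 0, 0, 1, 1, 1, 1, 2, 2, 0, 0] g.val 0

def cox (g : Fin 24) : Bool := List.elem g.val [9, 10, 16, 17, 18, 19, 20, 21]

/-- Hurwitz equivalence on words in the eight reflections. -/
inductive H : List (Fin 8) → List (Fin 8) → Prop
  | step (u : List (Fin 8)) (x y : Fin 8) (v : List (Fin 8)) :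
      H (u ++ x :: y :: v) (u ++ y :: cj x y :: v)
  | refl (l : List (Fin 8)) : H l l
  | symm {l l' : List (Fin 8)} : H l l' → H l' l
  | trans {l l' l'' : List (Fin 8)} : H l l' → H l' l'' → H l l''

theorem H.cons (p : Fin 8) {l l' : List (Fin 8)} (h : H l l') : H (p :: l) (p :: l') := by
  induction h with
  | step u x y v => exact H.step (p :: u) x y v
  | refl l => exact H.refl _
  | symm _ ih => exact ih.symm
  | trans _ _ ih1 ih2 => exact ih1.trans ih2

theorem H.appR (w : List (Fin 8)) {l l' : List (Fin 8)} (h : H l l') : H (l ++ w) (l' ++ w) := by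
  induction h with
  | step u x y v => simpa using H.step u x y (v ++ w)
  | refl l => exact H.refl _
  | symm _ ih => exact ih.symm
  | trans _ _ ih1 ih2 => exact ih1.trans ih2

theorem H.appL (w : List (Fin 8)) {l l' : List (Fin 8)} (h : H l l') : H (w ++ l) (w ++ l') := by
  induction w with
  | nil => exact h
  | cons p w ih => exact ih.cons p

theorem H.sw0 (x y : Fin 8) (v : List (Fin 8)) : H (x :: y :: v) (y :: cj x y :: v) :=
  H.step [] x y v

/-! ### Invariants -/

theorem mul_cj : ∀ (g : Fin 24) (x y : Fin 8),
    mulT (mulT g y) (cj x y) = mulT (mulT g x) y := by decide +kernel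

theorem kf_cj : ∀ x y : Fin 8, kf (cj x y) = kf x := by decide +kernel

theorem dt_mul : ∀ (g : Fin 24) (x : Fin 8),
    (dt (mulT g x) + kf x) % 3 = (dt g + 2) % 3 := by decide +kernel

theorem H.len {l l' : List (Fin 8)} (h : H l l') : l.length = l'.length := by
  induction h with
  | step u x y v => simp
  | refl l => rfl
  | symm _ ih => exact ih.symm
  | trans _ _ ih1 ih2 => exact ih1.trans ih2

theorem H.pr {l l' : List (Fin 8)} (h : H l l') : pr l = pr l' := by
  induction h with
  | step u x y v => simp [G4Proof.pr, mul_cj]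
  | refl l => rfl
  | symm _ ih => exact ih.symm
  | trans _ _ ih1 ih2 => exact ih1.trans ih2

theorem H.kap {l l' : List (Fin 8)} (h : H l l') : kap l = kap l' := by
  induction h with
  | step u x y v => simp [G4Proof.kap, kf_cj]; omega
  | refl l => rfl
  | symm _ ih => exact ih.symm
  | trans _ _ ih1 ih2 => exact ih1.trans ih2

theorem kf_le (x : Fin 8) : kf x ≤ 1 := by unfold kf; split <;> simp

theorem kap_le (l : List (Fin 8)) : kap l ≤ l.length := by
  induction l with
  | nil => simp [kap]
  | cons x l ih =>
    have := kf_le x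
    simp only [kap, List.map_cons, List.sum_cons, List.length_cons] at *
    omega

theorem kap_cons (x : Fin 8) (l : List (Fin 8)) : kap (x :: l) = kf x + kap l := by
  simp [kap]

theorem all0 (l : List (Fin 8)) (h : kap l = 0) : ∀ e ∈ l, kf e = 0 := by
  induction l with
  | nil => simp
  | cons x l ih =>
    rw [kap_cons] at h
    intro e he
    rcases List.mem_cons.1 he with rfl | he
    · omega
    · exact ih (by omega) e he

theorem all1 (l : List (Fin 8)) (h : kap l = l.length) : ∀ e ∈ l, kf e = 1 := by
  induction l with
  | nil => simp
  | cons x l ih =>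
    rw [kap_cons, List.length_cons] at h
    have h1 := kf_le x
    have h2 := kap_le l
    intro e he
    rcases List.mem_cons.1 he with rfl | he
    · omega
    · exact ih (by omega) e he

theorem dt_foldl (l : List (Fin 8)) (g : Fin 24) :
    (dt (l.foldl mulT g) + kap l) % 3 = (dt g + 2 * l.length) % 3 := by
  induction l generalizing g with
  | nil => simp [kap]
  | cons x l ih =>
    have h1 := ih (mulT g x)
    have h2 := dt_mul g x
    rw [kap_cons, List.length_cons, List.foldl_cons]
    omega

theorem dt_pr (l : List (Fin 8)) : (dt (pr l) + kap l) % 3 = (2 * l.length) % 3 := by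
  have := dt_foldl l 0
  have h0 : dt 0 = 0 := by decide +kernel
  rw [h0] at this
  simpa [pr] using this

/-! ### Braid walks -/

def sw : ℕ → List (Fin 8) → List (Fin 8)
  | 0, x :: y :: l => y :: cj x y :: l
  | n + 1, x :: l => x :: sw n l
  | _, l => l

theorem H_sw (n : ℕ) (l : List (Fin 8)) : H l (sw n l) := by
  induction n generalizing l with
  | zero =>
    match l with
    | [] => exact H.refl _
    | [x] => exact H.refl _
    | x :: y :: l => exact H.sw0 x y l
  | succ n ih =>
    match l with
    | [] => exact H.refl _
    | x :: l => exact (ih l).cons x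

def hits (good : List (Fin 8) → Bool) : List ℕ → List (Fin 8) → Bool
  | [], w => good w
  | i :: b, w => match good w with
    | true => true
    | false => hits good b (sw i w)

theorem hits_spec (good : List (Fin 8) → Bool) (b : List ℕ) (w : List (Fin 8))
    (h : hits good b w = true) : ∃ u, H w u ∧ good u = true := by
  induction b generalizing w with
  | nil => exact ⟨w, H.refl _, h⟩
  | cons i b ih =>
    rw [hits] at h
    cases hg : good w with
    | true => exact ⟨w, H.refl _, hg⟩
    | false =>
      rw [hg] at h
      obtain ⟨u, hu, hgu⟩ := ih _ h
      exact ⟨u, (H_sw i w).trans hu, hgu⟩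

def gA : List (Fin 8) → Bool
  | a :: b :: _ => b == inv8 a
  | _ => false

theorem gA_spec (u : List (Fin 8)) (h : gA u = true) : ∃ a t, u = a :: inv8 a :: t := by
  match u, h with
  | a :: b :: t, h =>
    have : b = inv8 a := by simpa [gA] using h
    exact ⟨a, t, by rw [this]⟩

def gB : List (Fin 8) → Bool
  | a :: b :: c :: _ => a == b && b == c
  | _ => false

theorem gB_spec (u : List (Fin 8)) (h : gB u = true) : ∃ a t, u = a :: a :: a :: t := by
  match u, h with
  | a :: b :: c :: t, h =>
    have : a = b ∧ b = c := by simpa [gB] using h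
    obtain ⟨rfl, rfl⟩ := this
    exact ⟨a, t, rfl⟩

def nc (x y : Fin 8) : Bool := !(y == x || y == inv8 x)

def walkA4 : List ℕ := [1, 1, 2, 1, 1, 2, 1, 1, 0, 1, 2, 1, 1, 0, 0, 2, 1, 2, 2, 1, 2, 2, 1]
def walkA5 : List ℕ := [3, 2, 1, 1, 2, 1, 1, 2, 1, 1, 0, 1, 3, 2, 2, 1, 1, 2, 2, 1, 3, 2, 1, 1]
def walkB : List ℕ :=
    [1, 2, 2, 1, 2, 2, 1, 2, 0, 1, 2, 1, 3, 2, 2, 1, 2, 2, 1, 2, 2, 2, 1, 3, 2, 2, 1, 2, 2, 1, 2,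
    2, 1, 2, 0, 0, 1, 3, 3, 2, 2, 1, 3, 2, 1, 1, 2, 3, 3, 2, 3, 2, 2, 3, 2, 3, 2, 1, 3, 3, 2, 2, 3,
    3, 2, 1, 1, 2, 2, 1, 1, 3, 2, 2, 3, 2, 2, 0, 1, 3, 2, 2]
def walk3 : List ℕ :=
    [1, 1, 0, 0, 1, 1, 0, 1, 1, 1, 0, 1, 1, 1, 0, 0, 1, 0, 0, 1, 1, 0, 0, 0, 1, 0, 0, 1, 1, 0, 1,
    1, 1, 0, 0, 0, 0, 0, 1, 1, 0, 1, 1, 1]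
def walk4 : List ℕ :=
    [1, 1, 0, 1, 1, 2, 2, 1, 1, 0, 1, 2, 1, 1, 0, 1, 1, 0, 1, 1, 2, 2, 1, 1, 2, 1, 1, 0, 1, 1, 2,
    1, 0, 2, 2, 1, 1, 0, 0, 2, 1, 1, 0, 1, 1, 2, 2, 1, 1, 0, 0, 1, 1, 2, 1, 1, 0, 0, 1, 2, 1, 2, 1,
    0, 1, 2, 2, 1, 0, 0, 1, 0, 0, 2, 1]
def walkZ : List ℕ :=
    [0, 1, 0, 0, 1, 0, 1, 0, 0, 1, 0, 2, 1, 0, 0, 1, 2, 2, 2, 0, 2, 2, 1, 0, 0, 1, 2, 2, 0, 2, 1,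
    0, 0, 1, 2, 2, 2, 0, 1, 0, 0, 1, 0, 2, 1, 0, 0, 1, 2, 2, 0, 1, 0, 2, 1, 1, 2, 0, 1, 0]
def walkP : List ℕ :=
    [2, 1, 0, 0, 1, 2, 2, 1, 0, 0, 1, 2, 3, 2, 1, 0, 0, 1, 2, 3, 3, 3, 2, 1, 0, 0, 1, 2, 3, 3, 3,
    3, 2, 1, 0, 0, 1, 2, 3, 2, 1, 0, 0, 1, 2, 3, 3, 3, 3, 2, 1, 0, 0, 1, 2, 3, 3, 3]
def walkQ : List ℕ :=
    [2, 1, 0, 0, 1, 2, 2, 1, 0, 0, 1, 2, 3, 2, 1, 0, 0, 1, 2, 3, 3, 3, 2, 1, 0, 0, 1, 2, 3, 3, 3,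
    3, 2, 1, 0, 0, 1, 2, 3, 3, 3, 2, 1, 0, 0, 1, 2, 3, 3, 2, 1, 0, 0, 1, 2, 3, 3, 3]

theorem chkA4 : ∀ x y : Fin 8, (kf x == 1 && kf y == 0) = true → ∀ p q : Fin 8,
    (pr [x, y, p, q] == 22 || hits gA walkA4 [x, y, p, q]) = true := by decide +kernel

theorem chkA5 : ∀ x y : Fin 8, (kf x == 1 && kf y == 0) = true → ∀ p q : Fin 8,
    pr [x, y, p, q] = 22 → ∀ r : Fin 8, hits gA walkA5 [x, y, p, q, r] = true := by
  decide +kernel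

theorem chkB : ∀ x y : Fin 8, nc x y = true → kf y = kf x → ∀ p : Fin 8, kf p = kf x →
    ∀ q : Fin 8, kf q = kf x → ∀ r : Fin 8, kf r = kf x →
    hits gB walkB [x, y, p, q, r] = true := by decide +kernel

theorem chkZ : ∀ x y : Fin 8, nc x y = true → ∀ a : Fin 8,
    hits (fun u => u == [0, 4, x, y]) walkZ [a, inv8 a, x, y] = true := by decide +kernel

theorem chkP : ∀ x y : Fin 8, nc x y = true → ∀ a : Fin 8, kf a = 1 →
    hits (fun u => u == [0, 0, 0, x, y]) walkP [a, a, a, x, y] = true := by decide +kernel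

theorem chkQ : ∀ x y : Fin 8, nc x y = true → ∀ a : Fin 8, kf a = 0 →
    hits (fun u => u == [4, 4, 4, x, y]) walkQ [a, a, a, x, y] = true := by decide +kernel

def C2 : List (List (Fin 8)) :=
  [[0, 1], [0, 2], [0, 3], [1, 2], [4, 5], [4, 6], [4, 7], [5, 7]]
def C3 : List (List (Fin 8)) :=
  [[0, 0, 5], [0, 0, 6], [0, 0, 7], [0, 5, 5], [0, 5, 7], [0, 6, 6], [0, 7, 7], [1, 1, 7]]
def C4 : List (List (Fin 8)) :=
  [[0, 0, 1, 1], [0, 0, 1, 2], [0, 0, 2, 2], [0, 0, 3, 3],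
    [4, 4, 5, 5], [4, 4, 5, 7], [4, 4, 6, 6], [4, 4, 7, 7]]

theorem chk2 : ∀ x y : Fin 8, cox (pr [x, y]) = true →
    hits (fun u => C2.elem u) [0, 0] [x, y] = true := by decide +kernel

theorem chk3 : ∀ x y z : Fin 8, cox (pr [x, y, z]) = true →
    hits (fun u => C3.elem u) walk3 [x, y, z] = true := by decide +kernel

theorem chk4 : ∀ x y : Fin 8, kf y = kf x → ∀ p : Fin 8, kf p = kf x →
    ∀ q : Fin 8, kf q = kf x → cox (pr [x, y, p, q]) = true →
    hits (fun u => C4.elem u) walk4 [x, y, p, q] = true := by decide +kernel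

theorem inj2 : ∀ u ∈ C2, ∀ v ∈ C2, pr u = pr v → u = v := by decide +kernel
theorem inj3 : ∀ u ∈ C3, ∀ v ∈ C3, pr u = pr v → u = v := by decide +kernel
theorem inj4 : ∀ u ∈ C4, ∀ v ∈ C4, pr u = pr v → u = v := by decide +kernel

/-! ### Word manipulation -/

theorem front (u : List (Fin 8)) (x y : Fin 8) (v : List (Fin 8)) :
    ∃ v', H (u ++ x :: y :: v) (x :: y :: v') := by
  induction u with
  | nil => exact ⟨v, H.refl _⟩
  | cons p u ih =>
    obtain ⟨v', hv⟩ := ih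
    exact ⟨_, (hv.cons p).trans ((H.sw0 p x _).trans ((H.sw0 (cj p x) y v').cons x))⟩

theorem cj_inv : ∀ p a : Fin 8, cj (cj p a) (inv8 a) = p := by decide +kernel
theorem cj_cube : ∀ p a : Fin 8, cj (cj (cj p a) a) a = p := by decide +kernel

theorem zmove (a : Fin 8) (u v : List (Fin 8)) :
    H (u ++ a :: inv8 a :: v) (a :: inv8 a :: (u ++ v)) := by
  induction u with
  | nil => exact H.refl _
  | cons p u ih =>
    refine (ih.cons p).trans ((H.sw0 p a _).trans ?_)
    have := (H.sw0 (cj p a) (inv8 a) (u ++ v)).cons a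
    rwa [cj_inv] at this

theorem cmove (a : Fin 8) (u v : List (Fin 8)) :
    H (u ++ a :: a :: a :: v) (a :: a :: a :: (u ++ v)) := by
  induction u with
  | nil => exact H.refl _
  | cons p u ih =>
    refine (ih.cons p).trans ((H.sw0 p a _).trans ?_)
    refine ((H.sw0 (cj p a) a (a :: (u ++ v))).cons a).trans ?_
    have := ((H.sw0 (cj (cj p a) a) a (u ++ v)).cons a).cons a
    rwa [cj_cube] at this

theorem nc_or (l : List (Fin 8)) :
    (∃ u x y v, l = u ++ x :: y :: v ∧ nc x y = true) ∨
      (∃ x, ∀ y ∈ l, y = x ∨ y = inv8 x) := by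
  induction l with
  | nil => exact Or.inr ⟨0, by simp⟩
  | cons p l ih =>
    rcases ih with ⟨u, x, y, v, rfl, h⟩ | ⟨x, hx⟩
    · exact Or.inl ⟨p :: u, x, y, v, rfl, h⟩
    · cases l with
      | nil => exact Or.inr ⟨p, by simp⟩
      | cons q l =>
        by_cases h : nc p q = true
        · exact Or.inl ⟨[], p, q, l, rfl, h⟩
        · right
          refine ⟨x, ?_⟩
          intro y hy
          rcases List.mem_cons.1 hy with rfl | hy
          · have hq := hx q (by simp)
            revert h hq
            clear hx hy
            revert x q y
            decide +kernel
          · exact hx y hy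

def ixx (x : Fin 8) : Fin 24 := ⟨x.val + 1, by omega⟩

theorem cyc_step : ∀ (x : Fin 8) (g : Fin 24), (g = 0 ∨ g = ixx x ∨ g = ixx (inv8 x)) →
    ∀ y : Fin 8, (y = x ∨ y = inv8 x) →
    (mulT g y = 0 ∨ mulT g y = ixx x ∨ mulT g y = ixx (inv8 x)) := by decide +kernel

theorem cyc_not_cox : ∀ (x : Fin 8) (g : Fin 24), (g = 0 ∨ g = ixx x ∨ g = ixx (inv8 x)) →
    cox g = false := by decide +kernel

theorem cyc_foldl (x : Fin 8) (l : List (Fin 8)) (hl : ∀ y ∈ l, y = x ∨ y = inv8 x)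
    (g : Fin 24) (hg : g = 0 ∨ g = ixx x ∨ g = ixx (inv8 x)) :
    cox (l.foldl mulT g) = false := by
  induction l generalizing g with
  | nil => exact cyc_not_cox x g hg
  | cons y l ih =>
    exact ih (fun z hz => hl z (List.mem_cons_of_mem _ hz)) _
      (cyc_step x g hg y (hl y (by simp)))

theorem exists_nc (l : List (Fin 8)) (h : cox (pr l) = true) :
    ∃ u x y v, l = u ++ x :: y :: v ∧ nc x y = true := by
  rcases nc_or l with h1 | ⟨x, hx⟩
  · exact h1
  · have := cyc_foldl x l hx 0 (Or.inl rfl)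
    rw [pr, this] at h
    cases h

theorem zconv (a : Fin 8) (w : List (Fin 8)) (h : cox (pr w) = true) :
    H (a :: inv8 a :: w) (0 :: 4 :: w) := by
  obtain ⟨u, x, y, v, rfl, hn⟩ := exists_nc w h
  obtain ⟨t, ht, hg⟩ := hits_spec _ _ _ (chkZ x y hn a)
  have hg : t = [0, 4, x, y] := by simpa using hg
  subst hg
  refine (zmove a u _).symm.trans (H.trans ?_ (zmove 0 u _))
  exact (ht.appR v).appL u

theorem pconv (a : Fin 8) (ha : kf a = 1) (w : List (Fin 8)) (h : cox (pr w) = true) :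
    H (a :: a :: a :: w) (0 :: 0 :: 0 :: w) := by
  obtain ⟨u, x, y, v, rfl, hn⟩ := exists_nc w h
  obtain ⟨t, ht, hg⟩ := hits_spec _ _ _ (chkP x y hn a ha)
  have hg : t = [0, 0, 0, x, y] := by simpa using hg
  subst hg
  refine (cmove a u _).symm.trans (H.trans ?_ (cmove 0 u _))
  exact (ht.appR v).appL u

theorem qconv (a : Fin 8) (ha : kf a = 0) (w : List (Fin 8)) (h : cox (pr w) = true) :
    H (a :: a :: a :: w) (4 :: 4 :: 4 :: w) := by
  obtain ⟨u, x, y, v, rfl, hn⟩ := exists_nc w h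
  obtain ⟨t, ht, hg⟩ := hits_spec _ _ _ (chkQ x y hn a ha)
  have hg : t = [4, 4, 4, x, y] := by simpa using hg
  subst hg
  refine (cmove a u _).symm.trans (H.trans ?_ (cmove 4 u _))
  exact (ht.appR v).appL u

theorem mul_inv0 : ∀ a : Fin 8, mulT (mulT 0 a) (inv8 a) = 0 := by decide +kernel
theorem mul_cube0 : ∀ a : Fin 8, mulT (mulT (mulT 0 a) a) a = 0 := by decide +kernel

theorem pr_z (a : Fin 8) (w : List (Fin 8)) : pr (a :: inv8 a :: w) = pr w := by
  simp [pr, mul_inv0]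

theorem pr_c (a : Fin 8) (w : List (Fin 8)) : pr (a :: a :: a :: w) = pr w := by
  simp [pr, mul_cube0]

theorem mixed_pair (l : List (Fin 8)) :
    (∃ u x y v, l = u ++ x :: y :: v ∧ kf x ≠ kf y) ∨ kap l = 0 ∨ kap l = l.length := by
  induction l with
  | nil => right; left; rfl
  | cons p l ih =>
    rcases ih with ⟨u, x, y, v, rfl, h⟩ | hh
    · exact Or.inl ⟨p :: u, x, y, v, rfl, h⟩
    · cases l with
      | nil =>
        have := kf_le p
        simp [kap]; omega
      | cons q l =>
        by_cases h : kf p = kf q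
        · right
          have h1 := kf_le q
          have h2 := kap_le l
          simp only [kap_cons, List.length_cons] at *
          omega
        · exact Or.inl ⟨[], p, q, l, rfl, h⟩

theorem cj_kf (x y : Fin 8) : kf (cj x y) = kf x := kf_cj x y

theorem claimA (w : List (Fin 8)) (hl : 4 ≤ w.length) (h0 : kap w ≠ 0)
    (h1 : kap w ≠ w.length) (hc : cox (pr w) = true) : ∃ v, H w (0 :: 4 :: v) := by
  -- first: a word starting with a reflection of R₁ followed by one of R₂
  have key : ∃ x y v, H w (x :: y :: v) ∧ kf x = 1 ∧ kf y = 0 := by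
    rcases mixed_pair w with ⟨u, x, y, v, rfl, h⟩ | h | h
    · obtain ⟨v', hv⟩ := front u x y v
      have hx := kf_le x
      have hy := kf_le y
      by_cases hx1 : kf x = 1
      · exact ⟨x, y, v', hv, hx1, by omega⟩
      · refine ⟨y, cj x y, v', hv.trans (H.sw0 x y v'), by omega, ?_⟩
        rw [kf_cj]; omega
    · exact absurd h h0
    · exact absurd h h1
  obtain ⟨x, y, v, hv, hx, hy⟩ := key
  have hlen := hv.len
  have hpr := hv.pr
  have hxy : (kf x == 1 && kf y == 0) = true := by simp [hx, hy]
  have fin : ∀ a t, H w (a :: inv8 a :: t) → ∃ v, H w (0 :: 4 :: v) := by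
    intro a t ht
    refine ⟨t, ht.trans (zconv a t ?_)⟩
    rw [← pr_z a t, ← ht.pr]
    exact hc
  match v, hv, hlen, hpr with
  | [], _, hlen, _ => simp at hlen; omega
  | [p], _, hlen, _ => simp at hlen; omega
  | p :: q :: v, hv, hlen, hpr =>
    by_cases h22 : pr [x, y, p, q] = 22
    · cases v with
      | nil =>
        rw [hpr, h22] at hc
        exact absurd hc (by decide +kernel)
      | cons r v =>
        obtain ⟨t, ht, hg⟩ := hits_spec _ _ _ (chkA5 x y hxy p q h22 r)
        obtain ⟨a, t, rfl⟩ := gA_spec _ hg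
        exact fin a _ (hv.trans (ht.appR v))
    · have hh := chkA4 x y hxy p q
      rw [Bool.or_eq_true, beq_iff_eq] at hh
      obtain ⟨t, ht, hg⟩ := hits_spec _ _ _ (hh.resolve_left h22)
      obtain ⟨a, t, rfl⟩ := gA_spec _ hg
      exact fin a _ (hv.trans (ht.appR v))

theorem H.unif {l l' : List (Fin 8)} (h : H l l') (s : ℕ) :
    (∀ e ∈ l, kf e = s) ↔ (∀ e ∈ l', kf e = s) := by
  induction h with
  | step u x y v =>
    simp only [List.mem_append, List.mem_cons]
    constructor
    · intro hh e he
      rcases he with he | rfl | rfl | he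
      · exact hh e (by simp [he])
      · exact hh e (by simp)
      · rw [kf_cj]; exact hh x (by simp)
      · exact hh e (by simp [he])
    · intro hh e he
      rcases he with he | rfl | rfl | he
      · exact hh e (by simp [he])
      · rw [← kf_cj e y]; exact hh _ (by simp)
      · exact hh e (by simp)
      · exact hh e (by simp [he])
  | refl l => rfl
  | symm _ ih => exact ih.symm
  | trans _ _ ih1 ih2 => exact ih1.trans ih2

theorem claimB (w : List (Fin 8)) (hl : 5 ≤ w.length) (s : ℕ) (hs : ∀ e ∈ w, kf e = s)
    (hc : cox (pr w) = true) : ∃ a v, kf a = s ∧ H w (a :: a :: a :: v) := by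
  obtain ⟨u, x, y, v0, rfl, hn⟩ := exists_nc w hc
  obtain ⟨v, hv⟩ := front u x y v0
  have hlen := hv.len
  have hu := (hv.unif s).1 hs
  rw [hlen] at hl
  match v, hv, hl, hu with
  | [], _, hl, _ => simp at hl
  | [p], _, hl, _ => simp at hl
  | [p, q], _, hl, _ => simp at hl
  | p :: q :: r :: v, hv, hl, hu =>
    have e1 := hu x (by simp)
    have e2 := hu y (by simp)
    have e3 := hu p (by simp)
    have e4 := hu q (by simp)
    have e5 := hu r (by simp)
    obtain ⟨t, ht, hg⟩ := hits_spec _ _ _ (chkB x y hn (by omega) p (by omega) q (by omega)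
      r (by omega))
    obtain ⟨a, t, rfl⟩ := gB_spec _ hg
    have hfin := hv.trans (ht.appR v)
    exact ⟨a, _, (hfin.unif s).1 hs a (by simp), hfin⟩

theorem base2 (w : List (Fin 8)) (hl : w.length = 2) (hc : cox (pr w) = true) :
    ∃ u ∈ C2, H w u := by
  obtain ⟨x, y, rfl⟩ := List.length_eq_two.1 hl
  obtain ⟨t, ht, hg⟩ := hits_spec _ _ _ (chk2 x y hc)
  exact ⟨t, by simpa using hg, ht⟩

theorem base3 (w : List (Fin 8)) (hl : w.length = 3) (hc : cox (pr w) = true) :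
    ∃ u ∈ C3, H w u := by
  obtain ⟨x, y, z, rfl⟩ := List.length_eq_three.1 hl
  obtain ⟨t, ht, hg⟩ := hits_spec _ _ _ (chk3 x y z hc)
  exact ⟨t, by simpa using hg, ht⟩

theorem base4 (w : List (Fin 8)) (hl : w.length = 4) (s : ℕ) (hs : ∀ e ∈ w, kf e = s)
    (hc : cox (pr w) = true) : ∃ u ∈ C4, H w u := by
  match w, hl with
  | [x, y, p, q], _ =>
    have e1 := hs x (by simp)
    have e2 := hs y (by simp)
    have e3 := hs p (by simp)
    have e4 := hs q (by simp)
    obtain ⟨t, ht, hg⟩ := hits_spec _ _ _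
      (chk4 x y (by omega) p (by omega) q (by omega) hc)
    exact ⟨t, by simpa using hg, ht⟩

theorem not_cox1 : ∀ x : Fin 8, cox (pr [x]) = false := by decide +kernel

theorem cubeN (s : Fin 8) (hs : s = 0 ∨ s = 4) (w : List (Fin 8)) (hl : 5 ≤ w.length)
    (hu : ∀ e ∈ w, kf e = kf s) (hc : cox (pr w) = true) : ∃ v, H w (s :: s :: s :: v) := by
  obtain ⟨a, v, ha, hv⟩ := claimB w hl _ hu hc
  have hcv : cox (pr v) = true := by rw [← pr_c a v, ← hv.pr]; exact hc
  rcases hs with rfl | rfl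
  · exact ⟨v, hv.trans (pconv a ha v hcv)⟩
  · exact ⟨v, hv.trans (qconv a ha v hcv)⟩

theorem uniq (n : ℕ) : ∀ w w' : List (Fin 8), w.length = n → w'.length = n →
    pr w = pr w' → cox (pr w) = true → kap w = kap w' → H w w' := by
  induction n using Nat.strong_induction_on with
  | _ n ih =>
    intro w w' hl hl' hp hc hk
    have hc' : cox (pr w') = true := hp ▸ hc
    have uni : 4 ≤ n → ∀ s : Fin 8, (s = 0 ∨ s = 4) → (∀ e ∈ w, kf e = kf s) →
        (∀ e ∈ w', kf e = kf s) → H w w' := by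
      intro h4 s hs hu hu'
      by_cases h5 : n = 4
      · obtain ⟨u, hu1, hu2⟩ := base4 w (by omega) _ hu hc
        obtain ⟨v, hv1, hv2⟩ := base4 w' (by omega) _ hu' hc'
        have : u = v := inj4 u hu1 v hv1 (by rw [← hu2.pr, ← hv2.pr, hp])
        subst this
        exact hu2.trans hv2.symm
      · obtain ⟨v, hv⟩ := cubeN s hs w (by omega) hu hc
        obtain ⟨v', hv'⟩ := cubeN s hs w' (by omega) hu' hc'
        have l1 := hv.len
        have l2 := hv'.len
        have k1 := hv.kap
        have k2 := hv'.kap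
        have p1 := hv.pr
        have p2 := hv'.pr
        simp only [kap_cons, List.length_cons, pr_c] at l1 l2 k1 k2 p1 p2
        have := ih (n - 3) (by omega) v v' (by omega) (by omega) (by rw [← p1, ← p2, hp])
          (by rw [← p1]; exact hc) (by omega)
        exact hv.trans ((((this.cons s).cons s).cons s).trans hv'.symm)
    by_cases h4 : 4 ≤ n
    · by_cases h0 : kap w = 0
      · exact uni h4 4 (Or.inr rfl) (all0 w h0) (all0 w' (by omega))
      by_cases h1 : kap w = w.length
      · exact uni h4 0 (Or.inl rfl) (all1 w h1) (all1 w' (by omega))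
      obtain ⟨v, hv⟩ := claimA w (by omega) h0 h1 hc
      obtain ⟨v', hv'⟩ := claimA w' (by omega) (by omega) (by omega) hc'
      have l1 := hv.len
      have l2 := hv'.len
      have k1 := hv.kap
      have k2 := hv'.kap
      have p1 : pr w = pr v := hv.pr.trans (pr_z 0 v)
      have p2 : pr w' = pr v' := hv'.pr.trans (pr_z 0 v')
      simp only [kap_cons, List.length_cons] at l1 l2 k1 k2
      have := ih (n - 2) (by omega) v v' (by omega) (by omega) (by rw [← p1, ← p2, hp])
        (by rw [← p1]; exact hc) (by omega)
      exact hv.trans (((this.cons 4).cons 0).trans hv'.symm)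
    · have hn : n = 0 ∨ n = 1 ∨ n = 2 ∨ n = 3 := by omega
      rcases hn with rfl | rfl | rfl | rfl
      · rw [List.length_eq_zero_iff.1 hl] at hc
        exact absurd hc (by decide +kernel)
      · obtain ⟨x, rfl⟩ := List.length_eq_one_iff.1 hl
        rw [not_cox1] at hc
        cases hc
      · obtain ⟨u, hu1, hu2⟩ := base2 w hl hc
        obtain ⟨v, hv1, hv2⟩ := base2 w' hl' hc'
        have : u = v := inj2 u hu1 v hv1 (by rw [← hu2.pr, ← hv2.pr, hp])
        subst this
        exact hu2.trans hv2.symm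
      · obtain ⟨u, hu1, hu2⟩ := base3 w hl hc
        obtain ⟨v, hv1, hv2⟩ := base3 w' hl' hc'
        have : u = v := inj3 u hu1 v hv1 (by rw [← hu2.pr, ← hv2.pr, hp])
        subst this
        exact hu2.trans hv2.symm

/-! ### Existence of words with prescribed invariants -/

theorem ex2 : ∀ g : Fin 24, cox g = true → ∀ k : Fin 3, (dt g + k.val) % 3 = 4 % 3 →
    ∃ w ∈ C2, w.length = 2 ∧ pr w = g ∧ kap w = k.val := by decide +kernel
theorem ex3 : ∀ g : Fin 24, cox g = true → ∀ k : Fin 4, (dt g + k.val) % 3 = 6 % 3 →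
    ∃ w ∈ C3, w.length = 3 ∧ pr w = g ∧ kap w = k.val := by decide +kernel
theorem ex4 : ∀ g : Fin 24, cox g = true → ∀ k : Fin 5, (k.val = 0 ∨ k.val = 4) →
    (dt g + k.val) % 3 = 8 % 3 →
    ∃ w ∈ C4, w.length = 4 ∧ pr w = g ∧ kap w = k.val := by decide +kernel

theorem exist (n : ℕ) : ∀ (k : ℕ) (g : Fin 24), 2 ≤ n → k ≤ n → cox g = true →
    (dt g + k) % 3 = (2 * n) % 3 → ∃ w, w.length = n ∧ pr w = g ∧ kap w = k := by
  induction n using Nat.strong_induction_on with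
  | _ n ih =>
    intro k g hn hk hg hm
    by_cases h2 : n = 2
    · subst h2
      obtain ⟨w, _, hw⟩ := ex2 g hg ⟨k, by omega⟩ hm
      exact ⟨w, hw⟩
    by_cases h3 : n = 3
    · subst h3
      obtain ⟨w, _, hw⟩ := ex3 g hg ⟨k, by omega⟩ hm
      exact ⟨w, hw⟩
    have k0 : kf 0 = 1 := rfl
    have k4 : kf 4 = 0 := rfl
    by_cases hmix : k ≠ 0 ∧ k ≠ n
    · obtain ⟨w, hw1, hw2, hw3⟩ := ih (n - 2) (by omega) (k - 1) g (by omega) (by omega) hg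
        (by omega)
      refine ⟨0 :: 4 :: w, ?_, ?_, ?_⟩
      · simp; omega
      · exact (pr_z 0 w).trans hw2
      · simp only [kap_cons, k0, k4]; omega
    by_cases h4 : n = 4
    · subst h4
      obtain ⟨w, _, hw⟩ := ex4 g hg ⟨k, by omega⟩ (by simp only; omega) hm
      exact ⟨w, hw⟩
    by_cases hk0 : k = 0
    · obtain ⟨w, hw1, hw2, hw3⟩ := ih (n - 3) (by omega) 0 g (by omega) (by omega) hg
        (by omega)
      refine ⟨4 :: 4 :: 4 :: w, ?_, ?_, ?_⟩
      · simp; omega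
      · exact (pr_c 4 w).trans hw2
      · simp only [kap_cons, k4]; omega
    · obtain ⟨w, hw1, hw2, hw3⟩ := ih (n - 3) (by omega) (k - 3) g (by omega) (by omega) hg
        (by omega)
      refine ⟨0 :: 0 :: 0 :: w, ?_, ?_, ?_⟩
      · simp; omega
      · exact (pr_c 0 w).trans hw2
      · simp only [kap_cons, k0]; omega

def tab : List ℤ :=
  [3, 0, 0, 0, 0, 0, 3, 0, 3, 0, 0, 0, 0, 0, 0, 3, 1, 2, -3, -3, 2, 2, 2, 1, 1, 2, 3, 0, 0, -2, 2,
    1, 1, 2, 0, 3, -2, 0, 2, 1, 3, 0, 0, 0, 0, 0, -3, -3, -1, -2, 0, -3, 0, 2, 1, -1, -1, -2, 3, 3,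
    2, 0, 1, -1, -1, -2, -3, 0, -2, -2, 1, -1, 1, 2, -3, -3, -2, 0, -1, 1, 1, 2, 3, 0, 2, 2, -1, 1,
    1, 2, -3, -3, 0, -2, -1, -2, 1, 2, 3, 0, -2, 0, -1, -2, -1, -2, 0, -3, -2, -2, 1, 2, 1, 2, 0,
    3, 2, 2, -1, -2, -1, -2, 3, 3, 0, 2, 1, 2, -1, -2, 0, -3, 2, 0, -2, -1, -1, -2, 3, 3, -2, -2,
    -2, -1, -3, 0, 0, 0, 0, 0, 0, -3, -1, -2, -3, 0, 0, 2, -2, -1, 1, 2, 0, 3, 0, -2, -1, 1, -3, 0,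
    0, 0, 0, 0, 3, 3, -3, 0, 0, 0, 0, 0, -3, 0, -1, -2, -3, 0, 2, 0, 1, 2]

def pth (g : Fin 24) : List (Fin 8) :=
  List.getD
    [[], [0], [1], [0, 0, 1, 0], [0, 1, 0, 0], [0, 0], [1, 1], [0, 0, 1, 1, 0], [0, 1, 1, 0, 0],
    [0, 1], [1, 0], [0, 0, 1], [0, 1, 0], [0, 1, 1], [1, 0, 0], [1, 1, 0], [0, 0, 1, 1], [0, 1, 1,
    0], [1, 0, 0, 1], [1, 1, 0, 0], [0, 0, 1, 0, 0], [0, 1, 0, 0, 1], [0, 0, 1, 0, 0, 1], [0, 0, 1,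
    1, 0, 0]] g.val []

/-! ### The concrete group -/

theorem om_prim : IsPrimitiveRoot ω 3 := by
  have := Complex.isPrimitiveRoot_exp 3 (by norm_num)
  simpa [ω] using this

theorem om_sq : ω ^ 2 = -1 - ω := by
  have h := om_prim.geom_sum_eq_zero (by norm_num)
  simp [Finset.sum_range_succ] at h
  linear_combination h

theorem om_ne (a b : ℤ) (h : (a : ℂ) + b * ω = 0) : a = 0 ∧ b = 0 := by
  have h2 : ((a * a - a * b + b * b : ℤ) : ℂ) = 0 := by
    push_cast
    linear_combination ((a : ℂ) + b * (-1 - ω)) * h + (b : ℂ) * b * om_sq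
  have h3 : a * a - a * b + b * b = 0 := by exact_mod_cast h2
  have ha : a = 0 := by nlinarith [sq_nonneg (a - 2 * b), sq_nonneg a]
  subst ha
  refine ⟨rfl, ?_⟩
  simpa using h3

def ent (g : Fin 24) (j : ℕ) : ℤ := tab.getD (8 * g.val + j) 0

def evE (p q : ℤ) : ℂ := ((p : ℂ) + q * ω) / 3

def evM (g : Fin 24) : Matrix (Fin 2) (Fin 2) ℂ :=
  !![evE (ent g 0) (ent g 1), evE (ent g 2) (ent g 3);
     evE (ent g 4) (ent g 5), evE (ent g 6) (ent g 7)]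

theorem evE_inj {p q r s : ℤ} (h : evE p q = evE r s) : p = r ∧ q = s := by
  have h2 := om_ne (p - r) (q - s) (by
    unfold evE at h
    push_cast
    linear_combination 3 * h)
  omega

theorem evE_dot {a b c d a' b' c' d' r s : ℤ}
    (h1 : a * c - b * d + (a' * c' - b' * d') = 3 * r)
    (h2 : a * d + b * c - b * d + (a' * d' + b' * c' - b' * d') = 3 * s) :
    evE a b * evE c d + evE a' b' * evE c' d' = evE r s := by
  have e1 : (a * c - b * d + (a' * c' - b' * d') : ℂ) = 3 * r := by exact_mod_cast h1
  have e2 : (a * d + b * c - b * d + (a' * d' + b' * c' - b' * d') : ℂ) = 3 * s := by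
    exact_mod_cast h2
  unfold evE
  linear_combination (1 / 9 : ℂ) * e1 + (ω / 9) * e2 + ((b * d + b' * d') / 9 : ℂ) * om_sq

def mulOK (g h f : Fin 24) (i j : ℕ) : Prop :=
  ent g i * ent h j - ent g (i + 1) * ent h (j + 1) +
      (ent g (i + 2) * ent h (j + 4) - ent g (i + 3) * ent h (j + 5)) = 3 * ent f (i + j) ∧
  ent g i * ent h (j + 1) + ent g (i + 1) * ent h j - ent g (i + 1) * ent h (j + 1) +
      (ent g (i + 2) * ent h (j + 5) + ent g (i + 3) * ent h (j + 4)
        - ent g (i + 3) * ent h (j + 5)) = 3 * ent f (i + j + 1)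

instance (g h f : Fin 24) (i j : ℕ) : Decidable (mulOK g h f i j) := by
  unfold mulOK; infer_instance

theorem mul_chk : ∀ (g : Fin 24) (x : Fin 8),
    mulOK g (ixx x) (mulT g x) 0 0 ∧ mulOK g (ixx x) (mulT g x) 0 2 ∧
    mulOK g (ixx x) (mulT g x) 4 0 ∧ mulOK g (ixx x) (mulT g x) 4 2 := by decide +kernel

theorem evM_mul (g : Fin 24) (x : Fin 8) : evM g * evM (ixx x) = evM (mulT g x) := by
  obtain ⟨h1, h2, h3, h4⟩ := mul_chk g x
  unfold evM
  rw [Matrix.mul_fin_two, evE_dot h1.1 h1.2, evE_dot h2.1 h2.2, evE_dot h3.1 h3.2,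
    evE_dot h4.1 h4.2]

theorem ent_inj : ∀ g h : Fin 24, (∀ j : Fin 8, ent g j.val = ent h j.val) → g = h := by
  decide +kernel

theorem evM_inj {g h : Fin 24} (e : evM g = evM h) : g = h := by
  have e00 := evE_inj (congrFun (congrFun e 0) 0)
  have e01 := evE_inj (congrFun (congrFun e 0) 1)
  have e10 := evE_inj (congrFun (congrFun e 1) 0)
  have e11 := evE_inj (congrFun (congrFun e 1) 1)
  apply ent_inj
  intro j
  fin_cases j
  · exact e00.1
  · exact e00.2
  · exact e01.1
  · exact e01.2
  · exact e10.1
  · exact e10.2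
  · exact e11.1
  · exact e11.2

def dP (g : Fin 24) (u v : ℤ) : ℤ :=
  (ent g 0 - 3 * u) * (ent g 6 - 3 * u) - (ent g 1 - 3 * v) * (ent g 7 - 3 * v)
    - (ent g 2 * ent g 4 - ent g 3 * ent g 5)

def dQ (g : Fin 24) (u v : ℤ) : ℤ :=
  (ent g 0 - 3 * u) * (ent g 7 - 3 * v) + (ent g 1 - 3 * v) * (ent g 6 - 3 * u)
    - (ent g 1 - 3 * v) * (ent g 7 - 3 * v)
    - (ent g 2 * ent g 5 + ent g 3 * ent g 4 - ent g 3 * ent g 5)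

theorem det_ev (g : Fin 24) (u v : ℤ) :
    9 * (evM g - ((u : ℂ) + v * ω) • (1 : Matrix (Fin 2) (Fin 2) ℂ)).det
      = (dP g u v : ℂ) + dQ g u v * ω := by
  unfold evM evE dP dQ
  rw [Matrix.det_fin_two]
  simp
  linear_combination ((ent g 1 - 3 * v) * (ent g 7 - 3 * v) - ent g 3 * ent g 5 : ℂ) * om_sq

theorem det_zero {g : Fin 24} {u v : ℤ}
    (h : (evM g - ((u : ℂ) + v * ω) • (1 : Matrix (Fin 2) (Fin 2) ℂ)).det = 0) :
    dP g u v = 0 ∧ dQ g u v = 0 := by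
  apply om_ne
  rw [← det_ev, h, mul_zero]

theorem evM_zero : evM 0 = 1 := by
  have h0 : ∀ j : Fin 8, ent 0 j.val = if j.val = 0 ∨ j.val = 6 then 3 else 0 := by
    decide +kernel
  have a0 : ent 0 0 = 3 := h0 0
  have a1 : ent 0 1 = 0 := h0 1
  have a2 : ent 0 2 = 0 := h0 2
  have a3 : ent 0 3 = 0 := h0 3
  have a4 : ent 0 4 = 0 := h0 4
  have a5 : ent 0 5 = 0 := h0 5
  have a6 : ent 0 6 = 3 := h0 6
  have a7 : ent 0 7 = 0 := h0 7
  unfold evM evE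
  rw [a0, a1, a2, a3, a4, a5, a6, a7, Matrix.one_fin_two]
  norm_num

theorem evM_A : evM (ixx 0) = AMat := by
  have h0 : ∀ j : Fin 8, ent (ixx 0) j.val = List.getD [3, 0, 0, 0, 0, 0, 0, 3] j.val 0 := by
    decide +kernel
  have a0 : ent (ixx 0) 0 = 3 := h0 0
  have a1 : ent (ixx 0) 1 = 0 := h0 1
  have a2 : ent (ixx 0) 2 = 0 := h0 2
  have a3 : ent (ixx 0) 3 = 0 := h0 3
  have a4 : ent (ixx 0) 4 = 0 := h0 4
  have a5 : ent (ixx 0) 5 = 0 := h0 5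
  have a6 : ent (ixx 0) 6 = 0 := h0 6
  have a7 : ent (ixx 0) 7 = 3 := h0 7
  unfold evM evE AMat
  rw [a0, a1, a2, a3, a4, a5, a6, a7]
  norm_num

theorem evM_B : evM (ixx 1) = BMat := by
  have h0 : ∀ j : Fin 8, ent (ixx 1) j.val = List.getD [1, 2, -3, -3, 2, 2, 2, 1] j.val 0 := by
    decide +kernel
  have a0 : ent (ixx 1) 0 = 1 := h0 0
  have a1 : ent (ixx 1) 1 = 2 := h0 1
  have a2 : ent (ixx 1) 2 = -3 := h0 2
  have a3 : ent (ixx 1) 3 = -3 := h0 3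
  have a4 : ent (ixx 1) 4 = 2 := h0 4
  have a5 : ent (ixx 1) 5 = 2 := h0 5
  have a6 : ent (ixx 1) 6 = 2 := h0 6
  have a7 : ent (ixx 1) 7 = 1 := h0 7
  unfold evM evE BMat
  rw [a0, a1, a2, a3, a4, a5, a6, a7, om_sq]
  ext i j
  fin_cases i <;> fin_cases j <;> simp <;> ring

theorem mat_mul (a b : G4) : mat (a * b) = mat a * mat b := by simp [mat]
theorem mat_one : mat 1 = 1 := by simp [mat]
theorem mat_inj {a b : G4} (h : mat a = mat b) : a = b := by
  apply Subtype.ext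
  apply Units.ext
  exact h

theorem mul_inv8 : ∀ x : Fin 8, mulT (ixx x) (inv8 x) = 0 ∧ inv8 (inv8 x) = x := by
  decide +kernel

/-- the unit with matrix `evM (ixx x)` -/
def uu (x : Fin 8) : GL (Fin 2) ℂ where
  val := evM (ixx x)
  inv := evM (ixx (inv8 x))
  val_inv := by rw [evM_mul, (mul_inv8 x).1, evM_zero]
  inv_val := by
    have := (mul_inv8 (inv8 x)).1
    rw [(mul_inv8 x).2] at this
    rw [evM_mul, this, evM_zero]

theorem uu0 : uu 0 ∈ G4 := Subgroup.subset_closure (Or.inl evM_A)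
theorem uu1 : uu 1 ∈ G4 := Subgroup.subset_closure (Or.inr evM_B)

theorem pth_chk : ∀ g : Fin 24, pr (pth g) = g ∧ ∀ x ∈ pth g, x = 0 ∨ x = 1 := by
  decide +kernel

theorem exists_foldl (l : List (Fin 8)) (hl : ∀ x ∈ l, x = 0 ∨ x = 1) (g : Fin 24)
    (hg : ∃ a : G4, mat a = evM g) : ∃ a : G4, mat a = evM (l.foldl mulT g) := by
  induction l generalizing g with
  | nil => exact hg
  | cons x l ih =>
    obtain ⟨a, ha⟩ := hg
    refine ih (fun y hy => hl y (List.mem_cons_of_mem _ hy)) _ ?_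
    have hx : uu x ∈ G4 := by
      rcases hl x (by simp) with rfl | rfl
      · exact uu0
      · exact uu1
    refine ⟨a * ⟨uu x, hx⟩, ?_⟩
    rw [mat_mul, ha, ← evM_mul]
    rfl

theorem exists_sig (g : Fin 24) : ∃ a : G4, mat a = evM g := by
  have := exists_foldl (pth g) (pth_chk g).2 0 ⟨1, by rw [mat_one, evM_zero]⟩
  rwa [← pr, (pth_chk g).1] at this

def sig (g : Fin 24) : G4 := (exists_sig g).choose
theorem mat_sig (g : Fin 24) : mat (sig g) = evM g := (exists_sig g).choose_spec

def rho (x : Fin 8) : G4 := sig (ixx x)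

theorem sig_mul (g : Fin 24) (x : Fin 8) : sig g * rho x = sig (mulT g x) := by
  apply mat_inj
  rw [mat_mul, rho, mat_sig, mat_sig, mat_sig, evM_mul]

theorem sig_zero : sig 0 = 1 := by
  apply mat_inj
  rw [mat_sig, mat_one, evM_zero]

theorem sig_inj {g h : Fin 24} (e : sig g = sig h) : g = h := by
  apply evM_inj
  rw [← mat_sig, ← mat_sig, e]

theorem sig_surj_aux (a : GL (Fin 2) ℂ) (ha : a ∈ G4) :
    ∃ g, (a : Matrix (Fin 2) (Fin 2) ℂ) = evM g := by
  unfold G4 at ha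
  induction ha using Subgroup.closure_induction_right with
  | one => exact ⟨0, by rw [evM_zero]; rfl⟩
  | mul_right a _ y hy ih =>
    obtain ⟨g, hg⟩ := ih
    rcases hy with hy | hy
    · refine ⟨mulT g 0, ?_⟩
      rw [← evM_mul, evM_A, ← hy, ← hg]; rfl
    · refine ⟨mulT g 1, ?_⟩
      rw [← evM_mul, evM_B, ← hy, ← hg]; rfl
  | mul_inv_cancel a _ y hy ih =>
    obtain ⟨g, hg⟩ := ih
    rcases hy with hy | hy
    · have : y = uu 0 := Units.ext (hy.trans evM_A.symm)
      subst this
      refine ⟨mulT g (inv8 0), ?_⟩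
      rw [← evM_mul, ← hg]; rfl
    · have : y = uu 1 := Units.ext (hy.trans evM_B.symm)
      subst this
      refine ⟨mulT g (inv8 1), ?_⟩
      rw [← evM_mul, ← hg]; rfl

theorem sig_surj (a : G4) : ∃ g, a = sig g := by
  obtain ⟨g, hg⟩ := sig_surj_aux a.1 a.2
  exact ⟨g, mat_inj (by rw [mat_sig]; exact hg)⟩

theorem refl_chk : ∀ g : Fin 24, dP g 1 0 = 0 ∧ dQ g 1 0 = 0 → g ≠ 0 → ∃ x : Fin 8, g = ixx x := by
  decide +kernel

theorem refl_chk2 : ∀ x : Fin 8, dP (ixx x) 1 0 = 0 ∧ dQ (ixx x) 1 0 = 0 := by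
  decide +kernel

theorem one_smul' : ((1 : ℤ) : ℂ) + ((0 : ℤ) : ℂ) * ω = 1 := by simp

theorem refl_rho (x : Fin 8) : IsReflection (rho x) := by
  constructor
  · intro h
    rw [rho, ← sig_zero] at h
    have hne : ∀ x : Fin 8, ixx x ≠ 0 := by decide
    exact hne x (sig_inj h)
  · have := det_ev (ixx x) 1 0
    rw [one_smul', one_smul, (refl_chk2 x).1, (refl_chk2 x).2] at this
    rw [rho, mat_sig]
    simpa using this

theorem refl_is_rho (t : G4) (h : IsReflection t) : ∃ x, t = rho x := by
  obtain ⟨g, rfl⟩ := sig_surj t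
  have h1 := h.2
  have : dP g 1 0 = 0 ∧ dQ g 1 0 = 0 := by
    apply det_zero
    rw [one_smul', one_smul, ← mat_sig]
    exact h1
  obtain ⟨x, hx⟩ := refl_chk g this (by
    rintro rfl
    exact h.1 sig_zero)
  exact ⟨x, by rw [hx]; rfl⟩

theorem cox_chk : ∀ g : Fin 24, (dP g 0 (-1) = 0 ∧ dQ g 0 (-1) = 0) ∨
    (dP g 1 1 = 0 ∧ dQ g 1 1 = 0) → cox g = true := by decide +kernel

theorem cox_is (g : Fin 24) (h : IsCoxeter (sig g)) : cox g = true := by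
  obtain ⟨ζ, hz, hd⟩ := h
  rw [mat_sig] at hd
  have h6 : ζ ^ 6 = 1 := hz.pow_eq_one
  have h3 : ζ ^ 3 ≠ 1 := hz.pow_ne_one_of_pos_of_lt (by norm_num) (by norm_num)
  have h2 : ζ ^ 2 ≠ 1 := hz.pow_ne_one_of_pos_of_lt (by norm_num) (by norm_num)
  have e1 : ζ ^ 3 = -1 := by
    have : (ζ ^ 3 - 1) * (ζ ^ 3 + 1) = 0 := by linear_combination h6
    rcases mul_eq_zero.1 this with h | h
    · exact absurd (by linear_combination h) h3
    · linear_combination h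
  have e2 : ζ ^ 2 - ζ + 1 = 0 := by
    have : (ζ + 1) * (ζ ^ 2 - ζ + 1) = 0 := by linear_combination e1
    rcases mul_eq_zero.1 this with h | h
    · exact absurd (by linear_combination (ζ - 1) * h) h2
    · exact h
  have e3 : (ζ + ω) * (ζ - (1 + ω)) = 0 := by
    linear_combination e2 - om_sq
  apply cox_chk
  rcases mul_eq_zero.1 e3 with h | h
  · left
    apply det_zero
    have : ((0 : ℤ) : ℂ) + ((-1 : ℤ) : ℂ) * ω = ζ := by
      push_cast
      linear_combination -h
    rw [this]; exact hd
  · right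
    apply det_zero
    have : ((1 : ℤ) : ℂ) + ((1 : ℤ) : ℂ) * ω = ζ := by
      push_cast
      linear_combination -h
    rw [this]; exact hd

theorem det_chk : ∀ x : Fin 8, (kf x = 1 → dP (ixx x) 0 0 = 0 ∧ dQ (ixx x) 0 0 = 9) ∧
    (kf x = 0 → dP (ixx x) 0 0 = -9 ∧ dQ (ixx x) 0 0 = -9) := by decide +kernel

theorem det_rho (x : Fin 8) : (mat (rho x)).det = ω ↔ kf x = 1 := by
  have h := det_ev (ixx x) 0 0
  simp only [Int.cast_zero, zero_mul, add_zero, zero_smul, sub_zero] at h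
  rw [rho, mat_sig]
  have hk := kf_le x
  constructor
  · intro hd
    by_contra hne
    have h0 : kf x = 0 := by omega
    rw [hd, ((det_chk x).2 h0).1, ((det_chk x).2 h0).2] at h
    have := om_ne 9 18 (by push_cast at h ⊢; linear_combination h)
    omega
  · intro h1
    rw [((det_chk x).1 h1).1, ((det_chk x).1 h1).2] at h
    push_cast at h
    linear_combination h / 9

/-! ### Transfer to tuples -/

theorem rho_inj {x y : Fin 8} (h : rho x = rho y) : x = y := by
  have := sig_inj h
  simp only [ixx, Fin.mk.injEq] at this
  apply Fin.ext
  omega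

theorem ixx_mul : ∀ x : Fin 8, mulT 0 x = ixx x := by decide +kernel

theorem rho_cj (x y : Fin 8) : rho (cj x y) = (rho y)⁻¹ * rho x * rho y := by
  have h : rho y * rho (cj x y) = rho x * rho y := by
    have := mul_cj 0 x y
    rw [ixx_mul, ixx_mul] at this
    rw [show rho y * rho (cj x y) = sig (ixx y) * rho (cj x y) from rfl, sig_mul, this, ← sig_mul]
    rfl
  rw [mul_assoc, ← h, inv_mul_cancel_left]

theorem prod_rho (l : List (Fin 8)) (g : Fin 24) :
    sig g * (l.map rho).prod = sig (l.foldl mulT g) := by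
  induction l generalizing g with
  | nil => simp
  | cons x l ih =>
    rw [List.map_cons, List.prod_cons, ← mul_assoc, sig_mul, ih, List.foldl_cons]

theorem prod_pr (l : List (Fin 8)) : (l.map rho).prod = sig (pr l) := by
  have := prod_rho l 0
  rwa [sig_zero, one_mul] at this

def tup (m : ℕ) (l : List (Fin 8)) : Fin m → G4 := fun i => rho (l.getD i.val 0)

theorem H.orbit {l l' : List (Fin 8)} (h : H l l') (m : ℕ) (hm : l.length = m) :
    SameHurwitzOrbit (tup m l) (tup m l') := by
  induction h with
  | step u x y v =>
    apply Relation.EqvGen.rel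
    have hm' : u.length + (v.length + 1 + 1) = m := by simpa using hm
    refine ⟨u.length, by omega, ?_, ?_, ?_⟩
    · simp [tup]
    · simp [tup, rho_cj]
    · intro j h1 h2
      simp only [tup]
      congr 1
      rcases lt_or_ge j.val u.length with hj | hj
      · rw [List.getD_append _ _ _ _ hj, List.getD_append _ _ _ _ hj]
      · obtain ⟨d, hd⟩ := Nat.exists_eq_add_of_le hj
        obtain ⟨e, rfl⟩ : ∃ e, d = e + 2 := ⟨d - 2, by omega⟩
        rw [hd, List.getD_append_right _ _ _ _ (by omega),
          List.getD_append_right _ _ _ _ (by omega)]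
        simp
  | refl l => exact Relation.EqvGen.refl _
  | symm h ih => exact Relation.EqvGen.symm _ _ (ih (h.len.trans hm))
  | trans h1 h2 ih1 ih2 =>
    exact Relation.EqvGen.trans _ _ _ (ih1 hm) (ih2 (h1.len.symm.trans hm))

open Classical in
def kt {m : ℕ} (t : Fin m → G4) : ℕ := ∑ i, if (mat (t i)).det = ω then 1 else 0

theorem det_conj (a b : G4) : (mat (b⁻¹ * a * b)).det = (mat a).det := by
  rw [mat_mul, mat_mul, Matrix.det_mul, Matrix.det_mul]
  have : (mat b⁻¹).det * (mat b).det = 1 := by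
    rw [← Matrix.det_mul, ← mat_mul, inv_mul_cancel, mat_one, Matrix.det_one]
  linear_combination (mat a).det * this

theorem kt_move {m : ℕ} (t t' : Fin m → G4) (h : IsHurwitzMove t t') : kt t = kt t' := by
  obtain ⟨i, hi, h1, h2, h3⟩ := h
  unfold kt
  refine Fintype.sum_equiv (Equiv.swap (⟨i, Nat.lt_of_succ_lt hi⟩ : Fin m) ⟨i + 1, hi⟩) _ _ ?_
  intro j
  by_cases ha : j = ⟨i, Nat.lt_of_succ_lt hi⟩
  · rw [ha, Equiv.swap_apply_left, h2, det_conj]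
  by_cases hb : j = ⟨i + 1, hi⟩
  · rw [hb, Equiv.swap_apply_right, h1]
  rw [Equiv.swap_apply_of_ne_of_ne ha hb, h3 j]
  · intro hj; exact ha (Fin.ext hj)
  · intro hj; exact hb (Fin.ext hj)

theorem kt_orbit {m : ℕ} (t t' : Fin m → G4) (h : SameHurwitzOrbit t t') : kt t = kt t' := by
  induction h with
  | rel _ _ h => exact kt_move _ _ h
  | refl _ => rfl
  | symm _ _ _ ih => exact ih.symm
  | trans _ _ _ _ _ ih1 ih2 => exact ih1.trans ih2

theorem ofFn_tup (m : ℕ) (l : List (Fin 8)) (hl : l.length = m) :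
    List.ofFn (tup m l) = l.map rho := by
  subst hl
  apply List.ext_getElem
  · simp
  · intro i h1 h2
    simp at h1
    simp [tup, h1]

theorem kt_tup (m : ℕ) (l : List (Fin 8)) (hl : l.length = m) : kt (tup m l) = kap l := by
  classical
  have h1 : kt (tup m l) = ((List.ofFn (tup m l)).map
      (fun a => if (mat a).det = ω then 1 else 0)).sum := by
    rw [List.map_ofFn, List.sum_ofFn]
    rfl
  rw [h1, ofFn_tup m l hl, kap, List.map_map]
  congr 1
  apply List.map_congr_left
  intro x _
  simp only [Function.comp, det_rho]
  have := kf_le x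
  split <;> omega

theorem tup_surj {m : ℕ} (t : Fin m → G4) (h : ∀ i, IsReflection (t i)) :
    ∃ l : List (Fin 8), l.length = m ∧ t = tup m l := by
  choose f hf using fun i => refl_is_rho (t i) (h i)
  refine ⟨List.ofFn f, by simp, ?_⟩
  funext i
  rw [hf i, tup]
  congr 1
  simp

theorem card_count (m d : ℕ) (hm : 2 ≤ m) (hd : d = 1 ∨ d = 2) :
    ((Finset.range (m + 1)).filter (fun k => (d + k) % 3 = (2 * m) % 3)).card = (m + 2) / 3 := by
  obtain ⟨q, hq⟩ : ∃ q, m = 3 * q ∨ m = 3 * q + 1 ∨ m = 3 * q + 2 := ⟨m / 3, by omega⟩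
  have key : (Finset.range (m + 1)).filter (fun k => (d + k) % 3 = (2 * m) % 3)
      = (Finset.range ((m + 2) / 3)).image (fun j => 3 * j + (2 * m + 3 - d) % 3) := by
    ext k
    simp only [Finset.mem_filter, Finset.mem_range, Finset.mem_image]
    constructor
    · rintro ⟨h1, h2⟩
      refine ⟨k / 3, ?_, ?_⟩ <;> rcases hd with rfl | rfl <;> rcases hq with rfl | rfl | rfl <;> omega
    · rintro ⟨j, h1, rfl⟩
      rcases hd with rfl | rfl <;> rcases hq with rfl | rfl | rfl <;> omega
  rw [key, Finset.card_image_of_injective, Finset.card_range]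
  intro a b h
  simp only at h
  omega

theorem cox_dt : ∀ g : Fin 24, cox g = true → dt g = 1 ∨ dt g = 2 := by decide +kernel

end G4Proof

open G4Proof in
theorem g4_orbit_count (m : ℕ) (hm : 2 ≤ m) (c : G4) (hc : IsCoxeter c) :
    {S : Set (Fin m → G4) | ∃ t : Fin m → G4,
      (∀ i, IsReflection (t i)) ∧ (List.ofFn t).prod = c ∧
      S = {s | SameHurwitzOrbit t s}}.ncard = (m + 2) / 3 := by
  obtain ⟨g, rfl⟩ := sig_surj c
  have hg := cox_is g hc
  set K := (Finset.range (m + 1)).filter (fun k => (dt g + k) % 3 = (2 * m) % 3) with hK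
  rw [← card_count m (dt g) hm (cox_dt g hg), ← hK, ← Set.ncard_coe_finset K]
  have hex : ∀ k ∈ (K : Set ℕ), ∃ w : List (Fin 8), w.length = m ∧ pr w = g ∧ kap w = k := by
    intro k hk
    rw [hK, Finset.mem_coe, Finset.mem_filter, Finset.mem_range] at hk
    exact exist m k g hm (by omega) hg hk.2
  symm
  refine Set.ncard_congr (fun k hk => {s | SameHurwitzOrbit (tup m (hex k hk).choose) s}) ?_ ?_ ?_
  · intro k hk
    obtain ⟨h1, h2, h3⟩ := (hex k hk).choose_spec
    exact ⟨tup m (hex k hk).choose, fun i => refl_rho _, by rw [ofFn_tup m _ h1, prod_pr, h2], rfl⟩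
  · intro k k' hk hk' he
    obtain ⟨h1, h2, h3⟩ := (hex k hk).choose_spec
    obtain ⟨h1', h2', h3'⟩ := (hex k' hk').choose_spec
    have hmem : tup m (hex k' hk').choose ∈
        {s | SameHurwitzOrbit (tup m (hex k hk).choose) s} := by
      rw [show {s | SameHurwitzOrbit (tup m (hex k hk).choose) s} = _ from he]
      exact Relation.EqvGen.refl _
    have := kt_orbit _ _ hmem
    rw [kt_tup m _ h1, kt_tup m _ h1', h3, h3'] at this
    exact this
  · rintro S ⟨t, ht, hp, rfl⟩
    obtain ⟨l, hl, rfl⟩ := tup_surj t ht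
    rw [ofFn_tup m l hl, prod_pr] at hp
    have hpl := sig_inj hp
    have hk : kap l ∈ (K : Set ℕ) := by
      rw [hK, Finset.mem_coe, Finset.mem_filter, Finset.mem_range]
      have := kap_le l
      have h2 := dt_pr l
      rw [hpl, hl] at h2
      exact ⟨by omega, h2⟩
    refine ⟨kap l, hk, ?_⟩
    obtain ⟨h1, h2, h3⟩ := (hex _ hk).choose_spec
    have hH := (uniq m _ l h1 hl (h2.trans hpl.symm) (by rw [h2]; exact hg) h3).orbit m h1
    ext s
    exact ⟨fun h => Relation.EqvGen.trans _ _ _ (Relation.EqvGen.symm _ _ hH) h,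
      fun h => Relation.EqvGen.trans _ _ _ hH h⟩
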